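/- Let X be a Tychonoff topological space, let 𝔅 be a bornology with compact base on X, and let κ be an infinite cardinal. If there exists a 𝔅-cover 𝒢 of X consisting of G_κ-sets which admits no 𝔅-subcover of cardinality at most κ, then there exists a family of collections of subsets of C_𝔅(X) that is κ-singular at the zero function 0̄. -/

import Mathlib

open Set Topology

universe u

/-- A bornology on `X`: a collection of subsets covering `X`, closed under
taking subsets and under finite unions. -/
structure IsBornology {X : Type*} (𝔅 : Set (Set X)) : Prop where
  covers : ⋃₀ 𝔅 = Set.univ
  empty_mem : ∅ ∈ 𝔅
  subset_mem : ∀ ⦃A B : Set X⦄, B ∈ 𝔅 → A ⊆ B → A ∈ 𝔅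
  union_mem : ∀ ⦃A B : Set X⦄, A ∈ 𝔅 → B ∈ 𝔅 → A ∪ B ∈ 𝔅

/-- `𝔅` has a compact base: every member of `𝔅` is contained in a compact member of `𝔅`. -/
def HasCompactBase {X : Type*} [TopologicalSpace X] (𝔅 : Set (Set X)) : Prop :=
  ∀ B ∈ 𝔅, ∃ K ∈ 𝔅, IsCompact K ∧ B ⊆ K

/-- The set of continuous real-valued functions on `X` (as a bare type, to be
topologized by a bornology). -/
def CFn (X : Type u) [TopologicalSpace X] : Type u := {f : X → ℝ // Continuous f}

/-- The zero function as an element of `CFn X`. -/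
def zeroFn (X : Type u) [TopologicalSpace X] : CFn X := ⟨fun _ => 0, continuous_const⟩

/-- The basic "ball" `⟨B, ε⟩[f] = {g : ∀ x ∈ B, |f x − g x| < ε}`. -/
def unifBall {X : Type u} [TopologicalSpace X] (f : CFn X) (B : Set X) (ε : ℝ) :
    Set (CFn X) :=
  {g | ∀ x ∈ B, |f.1 x - g.1 x| < ε}

/-- The topology of uniform convergence on members of a bornology `𝔅`:
a set is open iff around each of its points it contains a basic ball
`⟨B, ε⟩[f]` with `B ∈ 𝔅`, `ε > 0`.  This makes `CFn X` into `C_𝔅(X)`. -/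
def bornTopology {X : Type u} [TopologicalSpace X] (𝔅 : Set (Set X))
    (hB : IsBornology 𝔅) : TopologicalSpace (CFn X) where
  IsOpen U := ∀ f ∈ U, ∃ B ∈ 𝔅, ∃ ε > (0 : ℝ), unifBall f B ε ⊆ U
  isOpen_univ := fun f _ => ⟨∅, hB.empty_mem, 1, one_pos, fun _ _ => trivial⟩
  isOpen_inter := by
    intro U V hU hV f hf
    obtain ⟨B₁, hB₁, ε₁, hε₁, h₁⟩ := hU f hf.1
    obtain ⟨B₂, hB₂, ε₂, hε₂, h₂⟩ := hV f hf.2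
    refine ⟨B₁ ∪ B₂, hB.union_mem hB₁ hB₂, min ε₁ ε₂, lt_min hε₁ hε₂, fun g hg => ⟨?_, ?_⟩⟩
    · exact h₁ fun x hx => lt_of_lt_of_le (hg x (Or.inl hx)) (min_le_left _ _)
    · exact h₂ fun x hx => lt_of_lt_of_le (hg x (Or.inr hx)) (min_le_right _ _)
  isOpen_sUnion := by
    intro S hS f hf
    obtain ⟨U, hU, hfU⟩ := hf
    obtain ⟨B, hB', ε, hε, h⟩ := hS U hU f hfU
    exact ⟨B, hB', ε, hε, h.trans (Set.subset_sUnion_of_mem hU)⟩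

/-- `Ω_z`: the family of all subsets of `Z ∖ {z}` having `z` in their closure. -/
def OmegaAt {Z : Type*} [TopologicalSpace Z] (z : Z) : Set (Set Z) :=
  {A | A ⊆ {z}ᶜ ∧ z ∈ closure A}

/-- `𝒢` is a `𝔅`-cover of `X`: every member of `𝔅` is contained in a member of `𝒢`. -/
def IsBCover {X : Type*} (𝔅 : Set (Set X)) (𝒢 : Set (Set X)) : Prop :=
  ∀ B ∈ 𝔅, ∃ G ∈ 𝒢, B ⊆ G

/-- `𝒪_𝔅`: the family of all open `𝔅`-covers of `X`. -/
def OpenBCovers {X : Type*} [TopologicalSpace X] (𝔅 : Set (Set X)) : Set (Set (Set X)) :=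
  {𝒰 | (∀ U ∈ 𝒰, IsOpen U) ∧ IsBCover 𝔅 𝒰}

/-- `𝒢` is a K-cover of `X`: every compact subset of `X` is contained in a member of `𝒢`. -/
def IsKCover {X : Type*} [TopologicalSpace X] (𝒢 : Set (Set X)) : Prop :=
  ∀ K : Set X, IsCompact K → ∃ G ∈ 𝒢, K ⊆ G

/-- `𝒦`: the family of all open K-covers of `X`. -/
def KCovers (X : Type*) [TopologicalSpace X] : Set (Set (Set X)) :=
  {𝒰 | (∀ U ∈ 𝒰, IsOpen U) ∧ IsKCover 𝒰}

/-- Player II has a winning strategy in the game `G₁(𝒜, 𝒞)` (of length `ω`):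
a function assigning to each finite sequence `(A₀, …, Aₙ)` of moves of player I an
element of `Aₙ`, such that in any play following it the chosen points form a member of `𝒞`. -/
def G1WinII {T : Type*} (𝒜 𝒞 : Set (Set T)) : Prop :=
  ∃ σ : (n : ℕ) → (Fin (n + 1) → Set T) → T,
    (∀ (n : ℕ) (h : Fin (n + 1) → Set T), (∀ i, h i ∈ 𝒜) → σ n h ∈ h (Fin.last n)) ∧
    ∀ A : ℕ → Set T, (∀ n, A n ∈ 𝒜) →
      (Set.range fun n => σ n fun i => A i.1) ∈ 𝒞

/-- Player II has a winning strategy in the transfinite game `G₁^α(𝒜, 𝒞)` of length `α`. -/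
def G1WinIIOrd {T : Type*} (α : Ordinal.{0}) (𝒜 𝒞 : Set (Set T)) : Prop :=
  ∃ σ : (γ : {γ : Ordinal.{0} // γ < α}) → ({δ : Ordinal.{0} // δ ≤ γ.1} → Set T) → T,
    (∀ (γ : {γ : Ordinal.{0} // γ < α}) (h : {δ : Ordinal.{0} // δ ≤ γ.1} → Set T),
      (∀ δ, h δ ∈ 𝒜) → σ γ h ∈ h ⟨γ.1, le_rfl⟩) ∧
    ∀ A : {γ : Ordinal.{0} // γ < α} → Set T, (∀ γ, A γ ∈ 𝒜) →
      (Set.range fun γ : {γ : Ordinal.{0} // γ < α} =>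
        σ γ fun δ => A ⟨δ.1, lt_of_le_of_lt δ.2 γ.2⟩) ∈ 𝒞

/-- The selection principle `S₁(𝒜, 𝒞)`. -/
def S1 {T : Type*} (𝒜 𝒞 : Set (Set T)) : Prop :=
  ∀ A : ℕ → Set T, (∀ n, A n ∈ 𝒜) →
    ∃ a : ℕ → T, (∀ n, a n ∈ A n) ∧ Set.range a ∈ 𝒞

/-- `Z` has countable tightness. -/
def CountablyTight (Z : Type*) [TopologicalSpace Z] : Prop :=
  ∀ (z : Z) (A : Set Z), z ∈ closure A → ∃ B ⊆ A, B.Countable ∧ z ∈ closure B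

/-- `Z` is productively countably tight: `Z × Y` has countable tightness
for every countably tight space `Y`. -/
def ProductivelyCountablyTight (Z : Type u) [TopologicalSpace Z] : Prop :=
  ∀ (Y : Type u) [TopologicalSpace Y], CountablyTight Y → CountablyTight (Z × Y)

/-- `Z` has tightness at most `κ`. -/
def TightnessLE (Z : Type u) [TopologicalSpace Z] (κ : Cardinal.{u}) : Prop :=
  ∀ (z : Z) (A : Set Z), z ∈ closure A → ∃ B ⊆ A, Cardinal.mk B ≤ κ ∧ z ∈ closure B

/-- `κ ∈ Sp(Z)`: for every space `Y` of tightness at most `κ`, the product `Z × Y`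
has tightness at most `κ`. -/
def MemSp (Z : Type u) [TopologicalSpace Z] (κ : Cardinal.{u}) : Prop :=
  ∀ (Y : Type u) [TopologicalSpace Y], TightnessLE Y κ → TightnessLE (Z × Y) κ

/-- `G` is a `G_κ`-set: an intersection of at most `κ` open sets. -/
def IsGKappaSet {X : Type u} [TopologicalSpace X] (κ : Cardinal.{u}) (G : Set X) : Prop :=
  ∃ 𝒪 : Set (Set X), (∀ O ∈ 𝒪, IsOpen O) ∧ Cardinal.mk 𝒪 ≤ κ ∧ G = ⋂₀ 𝒪

/-- `G` is a `G_δ`-set: an intersection of countably many open sets. -/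
def IsGDeltaSet {X : Type*} [TopologicalSpace X] (G : Set X) : Prop :=
  ∃ 𝒪 : Set (Set X), (∀ O ∈ 𝒪, IsOpen O) ∧ 𝒪.Countable ∧ G = ⋂₀ 𝒪

/-- A family `ℙ` of collections of subsets of `Z` is `κ`-singular at `z`. -/
def KappaSingularAt {Z : Type u} [TopologicalSpace Z] (κ : Cardinal.{u})
    (ℙ : Set (Set (Set Z))) (z : Z) : Prop :=
  (∀ ξ ∈ ℙ, ∀ A ∈ ξ, Cardinal.mk A ≤ κ) ∧
  (∀ ξ ∈ ℙ, ∀ F : Finset (Set Z), ↑F ⊆ ξ → (⋂₀ (F : Set (Set Z))).Nonempty) ∧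
  (∀ O : Set Z, IsOpen O → z ∈ O → ∃ ξ ∈ ℙ, ∃ A ∈ ξ, A ⊆ O) ∧
  (∀ ℰ ⊆ ℙ, Cardinal.mk ℰ ≤ κ → ∃ c : Set (Set Z) → Set Z,
    (∀ ξ ∈ ℰ, c ξ ∈ ξ) ∧ z ∉ closure (⋃ ξ ∈ ℰ, c ξ))

/-- `X` is an Alster space. -/
def Alster (X : Type*) [TopologicalSpace X] : Prop :=
  ∀ 𝒢 : Set (Set X), (∀ G ∈ 𝒢, IsGDeltaSet G) → IsKCover 𝒢 →
    ∃ 𝒢' ⊆ 𝒢, 𝒢'.Countable ∧ ⋃₀ 𝒢' = Set.univ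

/-- `X` is strongly Alster. -/
def StronglyAlster (X : Type*) [TopologicalSpace X] : Prop :=
  ∀ 𝒢 : Set (Set X), (∀ G ∈ 𝒢, IsGDeltaSet G) → IsKCover 𝒢 →
    ∃ 𝒢' ⊆ 𝒢, 𝒢'.Countable ∧ IsKCover 𝒢'

/-- `X` is productively Lindelöf. -/
def ProductivelyLindelof (X : Type u) [TopologicalSpace X] : Prop :=
  ∀ (Y : Type u) [TopologicalSpace Y], LindelofSpace Y → LindelofSpace (X × Y)

/-- `X` is hemicompact. -/
def Hemicompact (X : Type*) [TopologicalSpace X] : Prop :=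
  ∃ K : ℕ → Set X, (∀ n, IsCompact (K n)) ∧ ∀ C : Set X, IsCompact C → ∃ n, C ⊆ K n

/-
For a compact `K` inside a `G_κ`-set `G = ⋂ i, O i`, choose continuous `f i ≥ 0` vanishing on `K`
and equal to `1` off `O i`. The finite sums of the `f i`, directed by inclusion of index sets, all
vanish on `K`, while at every point outside `G` they are eventually at least `1`. Their tails form
a collection that enters every neighbourhood of `0̄` determined by `K`. Yet any `κ` of these
collections can be kept away from `0̄` together: the sets `G` involved do not form a `𝔅`-cover, so
some `B ∈ 𝔅` is contained in none of them, and `⟨B, 1⟩[0̄]` misses suitably chosen tails.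
-/

open Cardinal Filter

section Tails

variable {ι Z : Type*} [Preorder ι]

/-- The collection of tails `{φ j : i ≤ j}` of a net `φ`. -/
def tails (φ : ι → Z) : Set (Set Z) := range fun i => φ '' Ici i

lemma nonempty_sInter_of_subset_tails [Nonempty ι] [IsDirectedOrder ι] (φ : ι → Z)
    {F : Finset (Set Z)} (hF : ↑F ⊆ tails φ) : (⋂₀ (F : Set (Set Z))).Nonempty := by
  classical
  rw [tails, ← image_univ] at hF
  obtain ⟨s, -, rfl⟩ := Finset.subset_set_image_iff.1 hF
  obtain ⟨j, hj⟩ := s.exists_le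
  refine ⟨φ j, ?_⟩
  simp only [Finset.coe_image, sInter_image, mem_iInter]
  exact fun i hi => mem_image_of_mem φ (hj i hi)

end Tails

lemma mk_le_mk_of_mem_tails {ι Z : Type u} [Preorder ι] {φ : ι → Z} {A : Set Z}
    (hA : A ∈ tails φ) : #A ≤ #ι := by
  obtain ⟨i, rfl⟩ := hA
  exact mk_image_le.trans (mk_set_le _)

lemma mk_finset_le_max (α : Type*) : #(Finset α) ≤ max ℵ₀ #α := by
  classical
  exact (mk_le_of_surjective List.toFinset_surjective).trans (mk_list_le_max α)

section BornTopology

variable {X : Type u} [TopologicalSpace X] {𝔅 : Set (Set X)}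

lemma unifBall_mem_nhds (hB : IsBornology 𝔅) (f : CFn X) {B : Set X} (hB𝔅 : B ∈ 𝔅) {ε : ℝ}
    (hε : 0 < ε) : unifBall f B ε ∈ @nhds _ (bornTopology 𝔅 hB) f := by
  let := bornTopology 𝔅 hB
  -- The ball itself need not be open: `|f - g|` may approach `ε` on `B`.
  have isOpen_slackBall : IsOpen {g : CFn X | ∃ δ < ε, ∀ x ∈ B, |f.1 x - g.1 x| ≤ δ} := by
    rintro g ⟨δ, hδ, hfg⟩
    refine ⟨B, hB𝔅, (ε - δ) / 2, by linarith, fun g' hgg' => ⟨(ε + δ) / 2, by linarith, ?_⟩⟩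
    intro x hx
    linarith [abs_sub_le (f.1 x) (g.1 x) (g'.1 x), hfg x hx, hgg' x hx]
  refine mem_of_superset (isOpen_slackBall.mem_nhds ⟨0, hε, by simp⟩) ?_
  exact fun g ⟨_, hδ, hfg⟩ x hx => (hfg x hx).trans_lt hδ

lemma hasBasis_nhds_bornTopology (hB : IsBornology 𝔅) (f : CFn X) :
    (@nhds _ (bornTopology 𝔅 hB) f).HasBasis (fun p : Set X × ℝ => p.1 ∈ 𝔅 ∧ 0 < p.2)
      fun p => unifBall f p.1 p.2 := by
  let := bornTopology 𝔅 hB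
  refine ⟨fun U => ⟨fun hU => ?_, fun ⟨p, ⟨hp𝔅, hp⟩, hpU⟩ =>
    mem_of_superset (unifBall_mem_nhds hB f hp𝔅 hp) hpU⟩⟩
  obtain ⟨V, hVU, hV, hfV⟩ := mem_nhds_iff.1 hU
  obtain ⟨B, hB𝔅, ε, hε, hBV⟩ := hV f hfV
  exact ⟨(B, ε), ⟨hB𝔅, hε⟩, hBV.trans hVU⟩

lemma notMem_closure_of_forall_exists_le (hB : IsBornology 𝔅) {f : CFn X} {S : Set (CFn X)}
    {B : Set X} (hB𝔅 : B ∈ 𝔅) {ε : ℝ} (hε : 0 < ε)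
    (hS : ∀ g ∈ S, ∃ x ∈ B, ε ≤ |f.1 x - g.1 x|) :
    f ∉ @closure _ (bornTopology 𝔅 hB) S := by
  let := bornTopology 𝔅 hB
  rw [mem_closure_iff_nhds_basis (hasBasis_nhds_bornTopology hB f)]
  intro hcl
  obtain ⟨g, hgS, hg⟩ := hcl (B, ε) ⟨hB𝔅, hε⟩
  obtain ⟨x, hxB, hx⟩ := hS g hgS
  exact (hg x hxB).not_ge hx

lemma exists_isCompact_forall_eqOn_mem (hB : IsBornology 𝔅) (hcb : HasCompactBase 𝔅) {f : CFn X}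
    {U : Set (CFn X)} (hU : U ∈ @nhds _ (bornTopology 𝔅 hB) f) :
    ∃ K ∈ 𝔅, IsCompact K ∧ ∀ g : CFn X, EqOn g.1 f.1 K → g ∈ U := by
  obtain ⟨⟨B, ε⟩, ⟨hB𝔅, hε⟩, hBU⟩ := (hasBasis_nhds_bornTopology hB f).mem_iff.1 hU
  obtain ⟨K, hK𝔅, hK, hBK⟩ := hcb B hB𝔅
  refine ⟨K, hK𝔅, hK, fun g hg => hBU fun x hx => ?_⟩
  rwa [hg (hBK hx), sub_self, abs_zero]

end BornTopology

lemma exists_continuous_zero_one_of_isCompact_of_isOpen {X : Type*} [TopologicalSpace X]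
    [CompletelyRegularSpace X] {K O : Set X} (hK : IsCompact K) (hO : IsOpen O) (hKO : K ⊆ O) :
    ∃ f : C(X, ℝ), EqOn f 0 K ∧ EqOn f 1 Oᶜ ∧ ∀ x, f x ∈ Icc (0 : ℝ) 1 := by
  obtain ⟨V, hV, rfl⟩ := isInducing_stoneCechUnit.isOpen_iff.1 hO
  have hKV : Disjoint (stoneCechUnit '' K) Vᶜ :=
    disjoint_compl_right_iff_subset.2 (image_subset_iff.2 hKO)
  obtain ⟨f, hf0, hf1, hfI⟩ := exists_continuous_zero_one_of_isClosed
    (hK.image continuous_stoneCechUnit).isClosed hV.isClosed_compl hKV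
  exact ⟨f.comp ⟨stoneCechUnit, continuous_stoneCechUnit⟩,
    fun x hx => hf0 (mem_image_of_mem _ hx), fun x hx => hf1 hx, fun x => hfI _⟩

section PartialSum

variable {X : Type u} [TopologicalSpace X] {ι : Type*} {f : ι → C(X, ℝ)} {x : X}

/-- The net of finite partial sums of a family of continuous functions, as points of `CFn X`. -/
def partialSum (f : ι → C(X, ℝ)) (F : Finset ι) : CFn X :=
  ⟨(∑ i ∈ F, f i : C(X, ℝ)), map_continuous _⟩

lemma partialSum_apply (F : Finset ι) : (partialSum f F).1 x = ∑ i ∈ F, f i x :=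
  ContinuousMap.sum_apply F f x

lemma partialSum_eq_zero (hf : ∀ i, f i x = 0) (F : Finset ι) : (partialSum f F).1 x = 0 := by
  rw [partialSum_apply, Finset.sum_eq_zero fun i _ => hf i]

lemma le_partialSum (hf : ∀ i, 0 ≤ f i x) {i : ι} {F : Finset ι} (hi : i ∈ F) :
    f i x ≤ (partialSum f F).1 x := by
  rw [partialSum_apply]
  exact Finset.single_le_sum (f := fun i => f i x) (fun j _ => hf j) hi

end PartialSum

section SeparatingCollection

variable {X : Type u} [TopologicalSpace X] {κ : Cardinal.{u}}

/-- A collection `ξ` of sets of at most `κ` functions, with the finite intersection property, that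
separates `K` from the complement of `G`: some member of `ξ` consists of functions vanishing on
`K`, and each point outside `G` has a member of `ξ` all of whose functions are at least `1`
there. -/
structure IsSeparatingCollection (κ : Cardinal.{u}) (K G : Set X) (ξ : Set (Set (CFn X))) :
    Prop where
  mk_le : ∀ A ∈ ξ, #A ≤ κ
  nonempty_sInter : ∀ F : Finset (Set (CFn X)), ↑F ⊆ ξ → (⋂₀ (F : Set (Set (CFn X)))).Nonempty
  exists_eqOn_zero : ∃ A ∈ ξ, ∀ g ∈ A, EqOn g.1 0 K
  exists_one_le : ∀ x ∉ G, ∃ A ∈ ξ, ∀ g ∈ A, 1 ≤ g.1 x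

lemma isSeparatingCollection_tails_partialSum {ι : Type u} {K : Set X} {O : ι → Set X}
    {f : ι → C(X, ℝ)} (hκ : ℵ₀ ≤ κ) (hι : #ι ≤ κ) (hfK : ∀ i, EqOn (f i) 0 K)
    (hfO : ∀ i, EqOn (f i) 1 (O i)ᶜ) (hf : ∀ i x, 0 ≤ f i x) :
    IsSeparatingCollection κ K (⋂ i, O i) (tails (partialSum f)) where
  mk_le A hA := calc
    #A ≤ #(Finset ι) := mk_le_mk_of_mem_tails hA
    _ ≤ max ℵ₀ #ι := mk_finset_le_max ι
    _ ≤ κ := max_le hκ hι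
  nonempty_sInter _ := nonempty_sInter_of_subset_tails _
  exists_eqOn_zero :=
    ⟨_, mem_range_self ∅, forall_mem_image.2 fun F _ _ hx => partialSum_eq_zero (hfK · hx) F⟩
  exists_one_le x hx := by
    obtain ⟨i, hi⟩ : ∃ i, x ∉ O i := by simpa only [mem_iInter, not_forall] using hx
    refine ⟨_, mem_range_self {i}, forall_mem_image.2 fun F hF => ?_⟩
    calc (1 : ℝ) = f i x := (hfO i hi).symm
      _ ≤ (partialSum f F).1 x := le_partialSum (hf · x) (Finset.singleton_subset_iff.1 hF)

lemma IsGKappaSet.exists_isSeparatingCollection [CompletelyRegularSpace X] {K G : Set X}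
    (hG : IsGKappaSet κ G) (hκ : ℵ₀ ≤ κ) (hK : IsCompact K) (hKG : K ⊆ G) :
    ∃ ξ, IsSeparatingCollection κ K G ξ := by
  obtain ⟨𝒪, h𝒪, hcard, rfl⟩ := hG
  choose f hfK hfO hfI using fun O : 𝒪 => exists_continuous_zero_one_of_isCompact_of_isOpen hK
    (h𝒪 O O.2) (hKG.trans (sInter_subset_of_mem O.2))
  rw [sInter_eq_iInter]
  exact ⟨_, isSeparatingCollection_tails_partialSum hκ hcard hfK hfO fun O x => (hfI O x).1⟩

end SeparatingCollection

lemma exists_mem_forall_not_subset {X ι : Type u} {κ : Cardinal.{u}} {𝔅 𝒢 : Set (Set X)}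
    (h𝒢 : ¬∃ 𝒢' ⊆ 𝒢, #𝒢' ≤ κ ∧ IsBCover 𝔅 𝒢') {ℰ : Set ι} (hℰ : #ℰ ≤ κ) {G : ι → Set X}
    (hG : MapsTo G ℰ 𝒢) : ∃ B ∈ 𝔅, ∀ i ∈ ℰ, ¬B ⊆ G i := by
  have hcover : ¬IsBCover 𝔅 (G '' ℰ) := fun hc =>
    h𝒢 ⟨G '' ℰ, hG.image_subset, mk_image_le.trans hℰ, hc⟩
  simpa only [IsBCover, exists_mem_image, not_forall, not_exists, not_and, exists_prop]
    using hcover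

theorem stmt6_general {X : Type u} [TopologicalSpace X] [CompletelyRegularSpace X]
    (𝔅 : Set (Set X)) (hB : IsBornology 𝔅) (hcb : HasCompactBase 𝔅)
    (κ : Cardinal.{u}) (hκ : ℵ₀ ≤ κ)
    (h : ∃ 𝒢 : Set (Set X), (∀ G ∈ 𝒢, IsGKappaSet κ G) ∧ IsBCover 𝔅 𝒢 ∧
      ¬∃ 𝒢' ⊆ 𝒢, #𝒢' ≤ κ ∧ IsBCover 𝔅 𝒢') :
    ∃ ℙ : Set (Set (Set (CFn X))),
      @KappaSingularAt (CFn X) (bornTopology 𝔅 hB) κ ℙ (zeroFn X) := by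
  obtain ⟨𝒢, hG, hcover, hsub⟩ := h
  let := bornTopology 𝔅 hB
  refine ⟨{ξ | ∃ G ∈ 𝒢, ∃ K, IsSeparatingCollection κ K G ξ}, fun ξ ⟨_, _, _, hξ⟩ => hξ.mk_le,
    fun ξ ⟨_, _, _, hξ⟩ => hξ.nonempty_sInter, fun U hU h0 => ?_, fun ℰ hℰ hcard => ?_⟩
  · obtain ⟨K, hK𝔅, hK, hKU⟩ := exists_isCompact_forall_eqOn_mem hB hcb (hU.mem_nhds h0)
    obtain ⟨G, hG𝒢, hKG⟩ := hcover K hK𝔅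
    obtain ⟨ξ, hξ⟩ := (hG G hG𝒢).exists_isSeparatingCollection hκ hK hKG
    obtain ⟨A, hAξ, hA⟩ := hξ.exists_eqOn_zero
    exact ⟨ξ, ⟨G, hG𝒢, K, hξ⟩, A, hAξ, fun g hg => hKU g (hA g hg)⟩
  · choose! G hG𝒢 K hsep using hℰ
    obtain ⟨B, hB𝔅, hBG⟩ := exists_mem_forall_not_subset hsub hcard hG𝒢
    have hlarge : ∀ ξ ∈ ℰ, ∃ A ∈ ξ, ∃ x ∈ B, ∀ g ∈ A, 1 ≤ g.1 x := fun ξ hξ => by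
      obtain ⟨x, hxB, hxG⟩ := not_subset.1 (hBG ξ hξ)
      obtain ⟨A, hAξ, hA⟩ := (hsep hξ).exists_one_le x hxG
      exact ⟨A, hAξ, x, hxB, hA⟩
    choose! A hAξ hA using hlarge
    refine ⟨A, hAξ, notMem_closure_of_forall_exists_le hB hB𝔅 one_pos fun g hg => ?_⟩
    obtain ⟨ξ, hξ, hgA⟩ := mem_iUnion₂.1 hg
    obtain ⟨x, hxB, hx⟩ := hA ξ hξ
    refine ⟨x, hxB, ?_⟩
    simpa only [zeroFn, zero_sub, abs_neg] using (hx g hgA).trans (le_abs_self _)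

/-- If there is a `𝔅`-cover of `X` by `G_κ`-sets with no `𝔅`-subcover of
cardinality at most `κ`, then there is a family of collections of subsets of `C_𝔅(X)`
that is `κ`-singular at `0̄`. -/
theorem stmt6 {X : Type u} [TopologicalSpace X] [T35Space X]
    (𝔅 : Set (Set X)) (hB : IsBornology 𝔅) (hcb : HasCompactBase 𝔅)
    (κ : Cardinal.{u}) (hκ : Cardinal.aleph0 ≤ κ)
    (h : ∃ 𝒢 : Set (Set X), (∀ G ∈ 𝒢, IsGKappaSet κ G) ∧ IsBCover 𝔅 𝒢 ∧
      ¬∃ 𝒢' ⊆ 𝒢, Cardinal.mk 𝒢' ≤ κ ∧ IsBCover 𝔅 𝒢') :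
    ∃ ℙ : Set (Set (Set (CFn X))),
      @KappaSingularAt (CFn X) (bornTopology 𝔅 hB) κ ℙ (zeroFn X) :=
  stmt6_general 𝔅 hB hcb κ hκ h
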